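/- Let N ≥ 1, r, s, c ∈ (0,1), α_s, α_r, α_c > 0, and let Ω_s, Ω_r ⊂ ℝ^N be disjoint nonempty open sets. Suppose α > 0 and there exists C > 0 such that for every v ∈ C_c^∞(ℝ^N), ‖v‖_{L²(ℝ^N)}^{2 + 4α/N} ≤ C ‖v‖_{L¹(ℝ^N)}^{4α/N} ( ‖v‖_{L²(ℝ^N)}² + Q(v) ). Then α ≤ min{r, s}. -/

import Mathlib

open MeasureTheory ENNReal

/-- The squared Gagliardo seminorm `[v]_{s,Ω}²` on an open set `Ω ⊆ ℝ^N`. -/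
noncomputable def gagliardoSq {N : ℕ} (s : ℝ) (Ω : Set (EuclideanSpace ℝ (Fin N)))
    (v : EuclideanSpace ℝ (Fin N) → ℝ) : ℝ≥0∞ :=
  ∫⁻ x in Ω, ∫⁻ y in Ω, ENNReal.ofReal ((v x - v y) ^ 2 / ‖x - y‖ ^ ((N : ℝ) + 2 * s))

/-- The cross (coupling) term between the two domains. -/
noncomputable def crossTerm {N : ℕ} (c : ℝ) (Ωs Ωr : Set (EuclideanSpace ℝ (Fin N)))
    (v : EuclideanSpace ℝ (Fin N) → ℝ) : ℝ≥0∞ :=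
  ∫⁻ x in Ωs, ∫⁻ y in Ωr, ENNReal.ofReal ((v x - v y) ^ 2 / ‖x - y‖ ^ ((N : ℝ) + 2 * c))

/-- The energy form `Q` of the coupled nonlocal problem. -/
noncomputable def energyQ {N : ℕ} (r s c αs αr αc : ℝ)
    (Ωs Ωr : Set (EuclideanSpace ℝ (Fin N))) (v : EuclideanSpace ℝ (Fin N) → ℝ) : ℝ≥0∞ :=
  ENNReal.ofReal (αs / 4) * gagliardoSq s Ωs v + ENNReal.ofReal (αr / 4) * gagliardoSq r Ωr v +
    ENNReal.ofReal (αc / 2) * crossTerm c Ωs Ωr v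

/-!
Fix a point `x₀` at positive distance from `Ωr` and test the inequality with
`v = φ ((· - x₀) / ε)`. The norms `‖v‖₂²` and `‖v‖₁` scale like `ε ^ N` and the `s`-seminorm of `v`
is at most a constant times `ε ^ (N - 2s)`. The `r`-seminorm over `Ωr` vanishes, and the coupling
term only sees the kernel away from its singularity, so it is at most a constant times `‖v‖₂²`.
Hence `ε ^ (N + 2α) ≲ ε ^ (4α) (ε ^ N + ε ^ (N - 2s))`; as `ε → 0` this forces `α ≤ s`. Exchanging
the roles of the two domains gives `α ≤ r`.
-/

open Filter Module Topology

section Kernel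

variable {E : Type*} [NormedAddCommGroup E] [NormedSpace ℝ E] [FiniteDimensional ℝ E]
  [MeasurableSpace E] [BorelSpace E] (μ : Measure E) [μ.IsAddHaarMeasure]

lemma integrableOn_ball_norm_rpow {q : ℝ} (hq : -(finrank ℝ E : ℝ) < q) (R : ℝ) :
    IntegrableOn (fun x : E ↦ ‖x‖ ^ q) (Metric.ball 0 R) μ := by
  cases subsingleton_or_nontrivial E
  · simpa only [norm_of_subsingleton] using
      integrableOn_const (C := (0 : ℝ) ^ q) measure_ball_lt_top.ne
  rw [integrableOn_fun_norm_addHaar μ (f := fun t : ℝ ↦ t ^ q)]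
  rcases le_or_gt R 0 with hR | hR
  · simp [Set.Ioo_eq_empty_of_le hR]
  refine ((intervalIntegral.integrableOn_Ioo_rpow_iff (s := (finrank ℝ E : ℝ) - 1 + q) hR).2
    (by linarith)).congr_fun (fun t ht ↦ ?_) measurableSet_Ioo
  simp only [smul_eq_mul]
  rw [Real.rpow_add ht.1, ← Nat.cast_pred finrank_pos, Real.rpow_natCast]

lemma integrableOn_compl_ball_norm_rpow {q : ℝ} (hq : q < -(finrank ℝ E : ℝ)) {R : ℝ}
    (hR : 0 < R) : IntegrableOn (fun x : E ↦ ‖x‖ ^ q) (Metric.ball 0 R)ᶜ μ := by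
  have hjap : Integrable (fun x : E ↦ (1 + R⁻¹) ^ (-q) * (1 + ‖x‖) ^ q) μ := by
    simpa using (integrable_one_add_norm (μ := μ) (r := -q) (by linarith)).const_mul _
  refine hjap.integrableOn.mono' (measurable_norm.pow_const q).aestronglyMeasurable <|
    (ae_restrict_iff' Metric.isOpen_ball.measurableSet.compl).2 (ae_of_all _ fun x hx ↦ ?_)
  have hRx : R ≤ ‖x‖ := by simpa using hx
  have hx0 : 0 < ‖x‖ := hR.trans_le hRx
  have hle : 1 + ‖x‖ ≤ (1 + R⁻¹) * ‖x‖ := by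
    have := (one_le_div hR).2 hRx
    linarith [inv_mul_eq_div R ‖x‖]
  rw [Real.norm_of_nonneg (by positivity)]
  calc ‖x‖ ^ q = (1 + R⁻¹) ^ (-q) * ((1 + R⁻¹) * ‖x‖) ^ q := by
        rw [Real.mul_rpow (by positivity) hx0.le, ← mul_assoc, ← Real.rpow_add (by positivity),
          neg_add_cancel, Real.rpow_zero, one_mul]
    _ ≤ (1 + R⁻¹) ^ (-q) * (1 + ‖x‖) ^ q := by
        gcongr ?_ * ?_
        exact Real.rpow_le_rpow_of_nonpos (by positivity) hle
          (hq.le.trans (neg_nonpos.2 (Nat.cast_nonneg _)))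

lemma integrable_min_one_norm_sq_div_norm_rpow {p : ℝ} (hp : (finrank ℝ E : ℝ) < p)
    (hp' : p < finrank ℝ E + 2) :
    Integrable (fun x : E ↦ min 1 (‖x‖ ^ 2) / ‖x‖ ^ p) μ := by
  have hmeas : Measurable (fun x : E ↦ min 1 (‖x‖ ^ 2) / ‖x‖ ^ p) := by fun_prop
  rw [← integrableOn_univ, ← Set.union_compl_self (Metric.ball (0 : E) 1)]
  refine .union
    ((integrableOn_ball_norm_rpow μ (q := 2 - p) (by linarith) 1).mono'
      hmeas.aestronglyMeasurable (ae_of_all _ fun x ↦ ?_))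
    ((integrableOn_compl_ball_norm_rpow μ (q := -p) (by linarith) one_pos).mono'
      hmeas.aestronglyMeasurable (ae_of_all _ fun x ↦ ?_))
  · rw [Real.norm_of_nonneg (by positivity)]
    rcases eq_or_ne x 0 with rfl | hx
    · simpa using Real.rpow_nonneg le_rfl (2 - p)
    · rw [Real.rpow_sub (norm_pos_iff.2 hx), Real.rpow_two]
      gcongr
      exact min_le_right _ _
  · rw [Real.norm_of_nonneg (by positivity), Real.rpow_neg (norm_nonneg x), ← one_div]
    gcongr
    exact min_le_left _ _

end Kernel

section DoubleIntegral

variable {G : Type*} [AddCommGroup G] [MeasurableSpace G] [MeasurableAdd₂ G] [MeasurableNeg G]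
  (μ : Measure G) [μ.IsAddLeftInvariant]

lemma lintegral_lintegral_left_mul_sub [μ.IsNegInvariant] {f g : G → ℝ≥0∞}
    (hf : Measurable f) (hg : Measurable g) :
    ∫⁻ x, ∫⁻ y, f x * g (x - y) ∂μ ∂μ = (∫⁻ x, f x ∂μ) * ∫⁻ z, g z ∂μ := by
  have hinner (x : G) : ∫⁻ y, f x * g (x - y) ∂μ = f x * ∫⁻ z, g z ∂μ := by
    rw [lintegral_const_mul _ (by fun_prop), lintegral_sub_left_eq_self]
  simp_rw [hinner]
  exact lintegral_mul_const _ hf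

lemma lintegral_lintegral_right_mul_sub [SFinite μ] {f g : G → ℝ≥0∞}
    (hf : Measurable f) (hg : Measurable g) :
    ∫⁻ x, ∫⁻ y, f y * g (x - y) ∂μ ∂μ = (∫⁻ x, f x ∂μ) * ∫⁻ z, g z ∂μ := by
  have hinner (y : G) : ∫⁻ x, f y * g (x - y) ∂μ = f y * ∫⁻ z, g z ∂μ := by
    rw [lintegral_const_mul _ (by fun_prop), lintegral_sub_right_eq_self]
  rw [lintegral_lintegral_swap (by fun_prop)]
  simp_rw [hinner]
  exact lintegral_mul_const _ hf

lemma lintegral_lintegral_add_mul_sub [SFinite μ] [μ.IsNegInvariant] {f g : G → ℝ≥0∞}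
    (hf : Measurable f) (hg : Measurable g) :
    ∫⁻ x, ∫⁻ y, (f x + f y) * g (x - y) ∂μ ∂μ = 2 * ((∫⁻ x, f x ∂μ) * ∫⁻ z, g z ∂μ) := by
  calc ∫⁻ x, ∫⁻ y, (f x + f y) * g (x - y) ∂μ ∂μ
      = ∫⁻ x, (∫⁻ y, f x * g (x - y) ∂μ + ∫⁻ y, f y * g (x - y) ∂μ) ∂μ := by
        simp only [add_mul]
        exact lintegral_congr fun x ↦ lintegral_add_left (by fun_prop) _
    _ = 2 * ((∫⁻ x, f x ∂μ) * ∫⁻ z, g z ∂μ) := by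
        rw [lintegral_add_left (Measurable.lintegral_prod_right (by fun_prop)),
          lintegral_lintegral_left_mul_sub _ hf hg, lintegral_lintegral_right_mul_sub _ hf hg,
          two_mul]

end DoubleIntegral

section Rescale

variable {E : Type*} [NormedAddCommGroup E] [NormedSpace ℝ E]

/-- The function `φ` concentrated at scale `ε` around `x₀`, without normalization:
`x ↦ φ ((x - x₀) / ε)`. These are the test functions that saturate the Nash inequality. -/
noncomputable def rescale (x₀ : E) (ε : ℝ) (φ : E → ℝ) (x : E) : ℝ :=
  φ (ε⁻¹ • (x - x₀))

lemma contDiff_rescale {n : WithTop ℕ∞} {φ : E → ℝ} (hφ : ContDiff ℝ n φ) (x₀ : E) (ε : ℝ) :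
    ContDiff ℝ n (rescale x₀ ε φ) :=
  hφ.comp (by fun_prop)

lemma hasCompactSupport_rescale {φ : E → ℝ} (hφ : HasCompactSupport φ) (x₀ : E) {ε : ℝ}
    (hε : ε ≠ 0) : HasCompactSupport (rescale x₀ ε φ) :=
  hφ.comp_homeomorph ((Homeomorph.subRight x₀).trans (Homeomorph.smulOfNeZero ε⁻¹ (inv_ne_zero hε)))

lemma support_rescale_subset {φ : E → ℝ} {R : ℝ} (hφ : Function.support φ ⊆ Metric.ball 0 R)
    (x₀ : E) {ε : ℝ} (hε : 0 < ε) :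
    Function.support (rescale x₀ ε φ) ⊆ Metric.ball x₀ (ε * R) := fun x hx ↦ by
  have hmem : ε⁻¹ • (x - x₀) ∈ Metric.ball 0 R := hφ hx
  rwa [mem_ball_zero_iff, norm_smul, norm_inv, Real.norm_of_nonneg hε.le, inv_mul_lt_iff₀ hε,
    ← mem_ball_iff_norm] at hmem

lemma le_dist_of_mem_support_rescale {φ : E → ℝ} {R : ℝ}
    (hφ : Function.support φ ⊆ Metric.ball 0 R) {x₀ : E} {ε d : ℝ} (hε : 0 < ε) {S : Set E}
    (hfar : ∀ y ∈ S, ε * R + d ≤ dist y x₀) {x : E}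
    (hx : x ∈ Function.support (rescale x₀ ε φ)) {y : E} (hy : y ∈ S) : d ≤ dist x y := by
  have hball : dist x x₀ < ε * R := support_rescale_subset hφ x₀ hε hx
  linarith [hfar y hy, dist_triangle_left y x₀ x]

variable [FiniteDimensional ℝ E] [MeasurableSpace E] [BorelSpace E] (μ : Measure E)
  [μ.IsAddHaarMeasure]

lemma lintegral_comp_inv_smul_sub (f : E → ℝ≥0∞) (x₀ : E) {ε : ℝ} (hε : 0 < ε) :
    ∫⁻ x, f (ε⁻¹ • (x - x₀)) ∂μ = ENNReal.ofReal ε ^ finrank ℝ E * ∫⁻ x, f x ∂μ := by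
  have hemb : MeasurableEmbedding (fun x : E ↦ ε⁻¹ • x) :=
    (Homeomorph.smulOfNeZero ε⁻¹ (inv_ne_zero hε.ne')).measurableEmbedding
  rw [lintegral_sub_right_eq_self (fun x ↦ f (ε⁻¹ • x)), ← hemb.lintegral_map,
    Measure.map_addHaar_smul μ (inv_ne_zero hε.ne'), lintegral_smul_measure, inv_pow, inv_inv,
    abs_of_pos (by positivity), ENNReal.ofReal_pow hε.le, smul_eq_mul]

lemma eLpNorm_rescale_rpow (φ : E → ℝ) {p : NNReal} (hp : p ≠ 0) (x₀ : E) {ε : ℝ} (hε : 0 < ε) :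
    eLpNorm (rescale x₀ ε φ) p μ ^ (p : ℝ) =
      ENNReal.ofReal ε ^ finrank ℝ E * eLpNorm φ p μ ^ (p : ℝ) := by
  rw [eLpNorm_nnreal_pow_eq_lintegral hp, eLpNorm_nnreal_pow_eq_lintegral hp]
  exact lintegral_comp_inv_smul_sub μ (fun x ↦ ‖φ x‖ₑ ^ (p : ℝ)) x₀ hε

end Rescale

lemma exists_sq_sub_le_mul_min {E : Type*} [NormedAddCommGroup E] [NormedSpace ℝ E] {φ : E → ℝ}
    (hφ : ContDiff ℝ 1 φ) (hφc : HasCompactSupport φ) :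
    ∃ M : ℝ, ∀ x y, (φ x - φ y) ^ 2 ≤ M * min 1 (‖x - y‖ ^ 2) := by
  obtain ⟨L, hL⟩ := hφ.lipschitzWith_of_hasCompactSupport hφc one_ne_zero
  obtain ⟨K, hK⟩ := hφc.exists_bound_of_continuous hφ.continuous
  refine ⟨max ((2 * K) ^ 2) ((L : ℝ) ^ 2), fun x y ↦ ?_⟩
  rw [mul_min_of_nonneg _ _ (by positivity), ← sq_abs]
  refine le_min ?_ ?_
  · have hbdd : |φ x - φ y| ≤ 2 * K := by
      linarith [norm_sub_le (φ x) (φ y), hK x, hK y, Real.norm_eq_abs (φ x - φ y)]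
    calc |φ x - φ y| ^ 2 ≤ (2 * K) ^ 2 := by gcongr
      _ ≤ max ((2 * K) ^ 2) ((L : ℝ) ^ 2) * 1 := by rw [mul_one]; exact le_max_left _ _
  · have hlip : |φ x - φ y| ≤ L * ‖x - y‖ := by
      simpa only [Real.dist_eq, dist_eq_norm x] using hL.dist_le_mul x y
    calc |φ x - φ y| ^ 2 ≤ (L * ‖x - y‖) ^ 2 := by gcongr
      _ = L ^ 2 * ‖x - y‖ ^ 2 := mul_pow _ _ _
      _ ≤ max ((2 * K) ^ 2) ((L : ℝ) ^ 2) * ‖x - y‖ ^ 2 := by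
        gcongr
        exact le_max_right _ _

section Scaling

lemma le_rpow_mul_of_scaled_inequality {n α s : ℝ} {t A B C D K : ℝ≥0∞} (hn : 0 < n) (hα : 0 ≤ α)
    (ht : t ≠ 0) (ht' : t ≠ ⊤)
    (h : (t ^ n * A) ^ (1 + 2 * α / n) ≤
      C * (t ^ n * B) ^ (4 * α / n) * (t ^ n * D + t ^ (n - 2 * s) * K)) :
    A ^ (1 + 2 * α / n) ≤
      C * B ^ (4 * α / n) * (t ^ (2 * α) * D + t ^ (2 * (α - s)) * K) := by
  have hexp : n * (1 + 2 * α / n) = n + 2 * α := by field_simp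
  have hexp' : n * (4 * α / n) = 4 * α := by field_simp
  have hsplit : t ^ (4 * α) * (t ^ n * D + t ^ (n - 2 * s) * K) =
      t ^ (n + 2 * α) * (t ^ (2 * α) * D + t ^ (2 * (α - s)) * K) := by
    simp only [mul_add, ← mul_assoc, ← ENNReal.rpow_add _ _ ht ht']
    ring_nf
  rw [ENNReal.mul_rpow_of_nonneg _ _ (by positivity),
    ENNReal.mul_rpow_of_nonneg _ _ (by positivity), ← ENNReal.rpow_mul, ← ENNReal.rpow_mul, hexp,
    hexp'] at h
  refine (ENNReal.mul_le_mul_iff_right (a := t ^ (n + 2 * α)) (by simp [ht, ht'])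
    (ENNReal.rpow_ne_top_of_ne_zero ht ht')).1 ?_
  calc t ^ (n + 2 * α) * A ^ (1 + 2 * α / n)
      ≤ C * (t ^ (4 * α) * B ^ (4 * α / n)) * (t ^ n * D + t ^ (n - 2 * s) * K) := h
    _ = C * B ^ (4 * α / n) * (t ^ (4 * α) * (t ^ n * D + t ^ (n - 2 * s) * K)) := by ring
    _ = t ^ (n + 2 * α) *
          (C * B ^ (4 * α / n) * (t ^ (2 * α) * D + t ^ (2 * (α - s)) * K)) := by
        rw [hsplit]
        ring

lemma tendsto_ofReal_rpow_mul_nhdsGT_zero {p : ℝ} (hp : 0 < p) {D : ℝ≥0∞} (hD : D ≠ ⊤) :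
    Tendsto (fun ε : ℝ ↦ ENNReal.ofReal ε ^ p * D) (𝓝[>] 0) (𝓝 0) := by
  have hcont : Continuous fun ε : ℝ ↦ ENNReal.ofReal ε ^ p * D :=
    (ENNReal.continuous_mul_const hD).comp
      (ENNReal.continuous_rpow_const.comp ENNReal.continuous_ofReal)
  simpa [hp] using (hcont.tendsto 0).mono_left nhdsWithin_le_nhds

lemma le_of_eventually_scaled_inequality {n α s : ℝ} {A B C D K : ℝ≥0∞} (hn : 0 < n) (hs : 0 ≤ s)
    (hA : A ≠ 0) (hB : B ≠ ⊤) (hC : C ≠ ⊤) (hD : D ≠ ⊤) (hK : K ≠ ⊤)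
    (h : ∀ᶠ ε in 𝓝[>] (0 : ℝ), (ENNReal.ofReal ε ^ n * A) ^ (1 + 2 * α / n) ≤
      C * (ENNReal.ofReal ε ^ n * B) ^ (4 * α / n) *
        (ENNReal.ofReal ε ^ n * D + ENNReal.ofReal ε ^ (n - 2 * s) * K)) :
    α ≤ s := by
  by_contra! hsα
  have hα : 0 < α := hs.trans_lt hsα
  have hbound : ∀ᶠ ε in 𝓝[>] (0 : ℝ), A ^ (1 + 2 * α / n) ≤ C * B ^ (4 * α / n) *
      (ENNReal.ofReal ε ^ (2 * α) * D + ENNReal.ofReal ε ^ (2 * (α - s)) * K) := by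
    filter_upwards [h, self_mem_nhdsWithin] with ε hε hpos
    exact le_rpow_mul_of_scaled_inequality hn hα.le (ENNReal.ofReal_pos.2 hpos).ne' ofReal_ne_top hε
  have hfin : C * B ^ (4 * α / n) ≠ ⊤ :=
    ENNReal.mul_ne_top hC (ENNReal.rpow_ne_top_of_nonneg (by positivity) hB)
  have hlim := ENNReal.Tendsto.const_mul
    ((tendsto_ofReal_rpow_mul_nhdsGT_zero (by positivity : 0 < 2 * α) hD).add
      (tendsto_ofReal_rpow_mul_nhdsGT_zero (by linarith : 0 < 2 * (α - s)) hK)) (.inr hfin)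
  rw [add_zero, mul_zero] at hlim
  have hpow : A ^ (1 + 2 * α / n) ≤ 0 := ge_of_tendsto hlim hbound
  exact hA ((ENNReal.rpow_eq_zero_iff_of_pos (by positivity)).1 (nonpos_iff_eq_zero.1 hpow))

end Scaling

lemma exists_forall_dist_le_of_not_dense {X : Type*} [PseudoMetricSpace X] {S : Set X}
    (hS : ¬ Dense S) : ∃ x₀, ∃ ρ > 0, ∀ y ∈ S, ρ ≤ dist y x₀ := by
  simp only [Metric.dense_iff, not_forall, Set.not_nonempty_iff_eq_empty] at hS
  obtain ⟨x₀, ρ, hρ, hempty⟩ := hS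
  refine ⟨x₀, ρ, hρ, fun y hy ↦ ?_⟩
  by_contra! hlt
  exact Set.notMem_empty y (hempty ▸ ⟨hlt, hy⟩)

lemma eq_zero_of_dist_support_le {X : Type*} [PseudoMetricSpace X] {S : Set X} {v : X → ℝ}
    {d : ℝ} (hd : 0 < d) (hsep : ∀ x ∈ Function.support v, ∀ y ∈ S, d ≤ dist x y) {y : X}
    (hy : y ∈ S) : v y = 0 := by
  by_contra hvy
  exact hd.not_ge (by simpa using hsep y hvy y hy)

lemma not_dense_of_disjoint_of_isOpen {X : Type*} [TopologicalSpace X] {U S : Set X}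
    (hU : IsOpen U) (hne : U.Nonempty) (hdisj : Disjoint U S) : ¬ Dense S := fun hS ↦
  (hS.inter_open_nonempty U hU hne).ne_empty hdisj.inter_eq

lemma eLpNorm_ne_zero_of_continuous {X : Type*} [TopologicalSpace X] [MeasurableSpace X]
    [OpensMeasurableSpace X] {μ : Measure X} [μ.IsOpenPosMeasure] {f : X → ℝ} (hf : Continuous f)
    (hf₀ : f ≠ 0) {p : ℝ≥0∞} (hp : p ≠ 0) : eLpNorm f p μ ≠ 0 := by
  rw [Ne, eLpNorm_eq_zero_iff hf.aestronglyMeasurable hp]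
  exact fun h ↦ hf₀ ((hf.ae_eq_iff_eq μ continuous_zero).1 h)

lemma exists_contDiff_support_subset_ball {E : Type*} [NormedAddCommGroup E]
    [NormedSpace ℝ E] [FiniteDimensional ℝ E] (x : E) {R : ℝ} (hR : 0 < R) :
    ∃ φ : E → ℝ, ContDiff ℝ (⊤ : ℕ∞) φ ∧ HasCompactSupport φ ∧
      Function.support φ ⊆ Metric.ball x R ∧ φ ≠ 0 := by
  obtain ⟨φ, hsupp, hφc, hφ, -, hφx⟩ :=
    exists_contDiff_tsupport_subset (n := ⊤) (Metric.ball_mem_nhds x hR)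
  refine ⟨φ, hφ, hφc, (subset_tsupport φ).trans hsupp, ?_⟩
  rintro rfl
  simp at hφx

section Energy

variable {N : ℕ}

local notation "𝔼" => EuclideanSpace ℝ (Fin N)

lemma gagliardoSq_mono (s : ℝ) {Ω Ω' : Set 𝔼} (h : Ω ⊆ Ω') (v : 𝔼 → ℝ) :
    gagliardoSq s Ω v ≤ gagliardoSq s Ω' v :=
  (lintegral_mono fun _ ↦ lintegral_mono_set h).trans (lintegral_mono_set h)

lemma gagliardoSq_eq_zero (s : ℝ) {Ω : Set 𝔼} {v : 𝔼 → ℝ} (hv : ∀ x ∈ Ω, v x = 0) :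
    gagliardoSq s Ω v = 0 := by
  have hinner (x) (hx : x ∈ Ω) :
      ∫⁻ y in Ω, ENNReal.ofReal ((v x - v y) ^ 2 / ‖x - y‖ ^ ((N : ℝ) + 2 * s)) ≤ 0 := by
    simpa using setLIntegral_mono measurable_zero fun y hy ↦ by simp [hv x hx, hv y hy]
  simpa [gagliardoSq] using setLIntegral_mono measurable_zero hinner

lemma gagliardoSq_univ_ne_top {s : ℝ} (hs : s ∈ Set.Ioo (0 : ℝ) 1) {φ : 𝔼 → ℝ}
    (hφ : ContDiff ℝ 1 φ) (hφc : HasCompactSupport φ) : gagliardoSq s Set.univ φ ≠ ⊤ := by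
  obtain ⟨M, hM⟩ := exists_sq_sub_le_mul_min hφ hφc
  set B := tsupport φ
  let χ : 𝔼 → ℝ≥0∞ := B.indicator 1
  have hχ : Measurable χ := measurable_one.indicator (isClosed_tsupport φ).measurableSet
  let k : 𝔼 → ℝ≥0∞ := fun z ↦
    ENNReal.ofReal (M * (min 1 (‖z‖ ^ 2) / ‖z‖ ^ ((N : ℝ) + 2 * s)))
  have hk : Measurable k := by fun_prop
  have hpoint (x y) :
      ENNReal.ofReal ((φ x - φ y) ^ 2 / ‖x - y‖ ^ ((N : ℝ) + 2 * s)) ≤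
        (χ x + χ y) * k (x - y) := by
    by_cases hxy : x ∈ B ∨ y ∈ B
    · have hone : 1 ≤ χ x + χ y := by
        rcases hxy with h | h <;> simp [χ, h]
      refine le_mul_of_one_le_of_le hone (ENNReal.ofReal_le_ofReal ?_)
      rw [← mul_div_assoc]
      gcongr
      exact hM x y
    · push Not at hxy
      simp [image_eq_zero_of_notMem_tsupport hxy.1, image_eq_zero_of_notMem_tsupport hxy.2]
  have hkfin : ∫⁻ z, k z ≠ ⊤ :=
    ((integrable_min_one_norm_sq_div_norm_rpow volume (by simp [hs.1])
      (by simp only [finrank_euclideanSpace_fin]; linarith [hs.2])).const_mul M).lintegral_lt_top.ne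
  have hBfin : ∫⁻ x, χ x ≠ ⊤ := by
    rw [lintegral_indicator_one (isClosed_tsupport φ).measurableSet]
    exact hφc.isCompact.measure_lt_top.ne
  have hle : gagliardoSq s Set.univ φ ≤ 2 * ((∫⁻ x, χ x) * ∫⁻ z, k z) := by
    simp only [gagliardoSq, Measure.restrict_univ]
    rw [← lintegral_lintegral_add_mul_sub _ hχ hk]
    gcongr
    apply hpoint
  exact ne_top_of_le_ne_top (by finiteness) hle

lemma gagliardoSq_univ_rescale (s : ℝ) (φ : 𝔼 → ℝ) (x₀ : 𝔼) {ε : ℝ} (hε : 0 < ε) :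
    gagliardoSq s Set.univ (rescale x₀ ε φ) =
      ENNReal.ofReal ε ^ ((N : ℝ) - 2 * s) * gagliardoSq s Set.univ φ := by
  have hε₀ : ENNReal.ofReal ε ≠ 0 := (ENNReal.ofReal_pos.2 hε).ne'
  let F (X Y : 𝔼) : ℝ≥0∞ :=
    ENNReal.ofReal ((φ X - φ Y) ^ 2 / ‖X - Y‖ ^ ((N : ℝ) + 2 * s))
  have hpoint (x y : 𝔼) :
      ENNReal.ofReal ((rescale x₀ ε φ x - rescale x₀ ε φ y) ^ 2 / ‖x - y‖ ^ ((N : ℝ) + 2 * s)) =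
        ENNReal.ofReal ε ^ (-((N : ℝ) + 2 * s)) * F (ε⁻¹ • (x - x₀)) (ε⁻¹ • (y - x₀)) := by
    have hnorm : ‖x - y‖ = ε * ‖ε⁻¹ • (x - x₀) - ε⁻¹ • (y - x₀)‖ := by
      rw [← smul_sub, sub_sub_sub_cancel_right, norm_smul, norm_inv, Real.norm_of_nonneg hε.le,
        mul_inv_cancel_left₀ hε.ne']
    rw [ENNReal.ofReal_rpow_of_pos hε, ← ENNReal.ofReal_mul (by positivity), hnorm,
      Real.mul_rpow hε.le (norm_nonneg _), Real.rpow_neg hε.le, rescale, rescale, inv_mul_eq_div,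
      div_div, mul_comm (ε ^ _)]
  simp only [gagliardoSq, Measure.restrict_univ, hpoint]
  calc ∫⁻ x, ∫⁻ y, ENNReal.ofReal ε ^ (-((N : ℝ) + 2 * s)) * F (ε⁻¹ • (x - x₀)) (ε⁻¹ • (y - x₀))
      = ENNReal.ofReal ε ^ (-((N : ℝ) + 2 * s)) *
          (ENNReal.ofReal ε ^ N * (ENNReal.ofReal ε ^ N * ∫⁻ X, ∫⁻ Y, F X Y)) := by
        simp_rw [lintegral_const_mul' _ _ (ENNReal.rpow_ne_top_of_ne_zero hε₀ ofReal_ne_top),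
          lintegral_comp_inv_smul_sub volume (F _) x₀ hε,
          lintegral_const_mul' _ _ (ENNReal.pow_ne_top ofReal_ne_top),
          lintegral_comp_inv_smul_sub volume (fun X ↦ ∫⁻ Y, F X Y) x₀ hε,
          finrank_euclideanSpace_fin]
    _ = ENNReal.ofReal ε ^ ((N : ℝ) - 2 * s) * ∫⁻ X, ∫⁻ Y, F X Y := by
        rw [← mul_assoc, ← mul_assoc, ← ENNReal.rpow_natCast,
          ← ENNReal.rpow_add _ _ hε₀ ofReal_ne_top, ← ENNReal.rpow_add _ _ hε₀ ofReal_ne_top]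
        congr 2
        ring

lemma crossTerm_comm (c : ℝ) (Ω Ω' : Set 𝔼) {v : 𝔼 → ℝ} (hv : Measurable v) :
    crossTerm c Ω Ω' v = crossTerm c Ω' Ω v := by
  simp only [crossTerm]
  rw [lintegral_lintegral_swap (by fun_prop)]
  simp only [norm_sub_rev, sub_sq_comm]

lemma energyQ_swap (r s c αs αr αc : ℝ) (Ωs Ωr : Set 𝔼) {v : 𝔼 → ℝ} (hv : Measurable v) :
    energyQ s r c αr αs αc Ωr Ωs v = energyQ r s c αs αr αc Ωs Ωr v := by
  rw [energyQ, energyQ, crossTerm_comm c Ωr Ωs hv, add_comm (_ * gagliardoSq r Ωr v)]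

/-- The kernel `‖z‖ ^ (-(N + 2c))` cut off inside the ball of radius `d`. Its mass controls the
coupling term of functions supported at distance at least `d` from the other domain. -/
noncomputable def tailKernel (N : ℕ) (c d : ℝ) : EuclideanSpace ℝ (Fin N) → ℝ≥0∞ :=
  (Metric.ball 0 d)ᶜ.indicator fun z ↦ ENNReal.ofReal (‖z‖ ^ (-((N : ℝ) + 2 * c)))

lemma measurable_tailKernel (c d : ℝ) : Measurable (tailKernel N c d) := by
  refine Measurable.indicator ?_ Metric.isOpen_ball.measurableSet.compl
  fun_prop

lemma lintegral_tailKernel_ne_top {c d : ℝ} (hc : 0 < c) (hd : 0 < d) :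
    ∫⁻ z, tailKernel N c d z ≠ ⊤ := by
  simp only [tailKernel]
  rw [lintegral_indicator Metric.isOpen_ball.measurableSet.compl]
  exact (integrableOn_compl_ball_norm_rpow volume (by simp [hc]) hd).lintegral_lt_top.ne

lemma eLpNorm_two_rpow_eq_lintegral (v : 𝔼 → ℝ) :
    eLpNorm v 2 ^ (2 : ℝ) = ∫⁻ x, ‖v x‖ₑ ^ (2 : ℝ) := by
  simpa using eLpNorm_nnreal_pow_eq_lintegral (μ := volume) (f := v) (p := 2) two_ne_zero

lemma crossTerm_integrand_le_of_dist_le (c : ℝ) {d : ℝ} (hd : 0 < d) {Ω : Set 𝔼} {v : 𝔼 → ℝ}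
    (hsep : ∀ x ∈ Function.support v, ∀ y ∈ Ω, d ≤ dist x y) (x : 𝔼) {y : 𝔼} (hy : y ∈ Ω) :
    ENNReal.ofReal ((v x - v y) ^ 2 / ‖x - y‖ ^ ((N : ℝ) + 2 * c)) ≤
      ‖v x‖ₑ ^ (2 : ℝ) * tailKernel N c d (x - y) := by
  rw [eq_zero_of_dist_support_le hd hsep hy, sub_zero]
  rcases eq_or_ne (v x) 0 with hvx | hvx
  · simp [hvx]
  have hmem : x - y ∈ (Metric.ball (0 : 𝔼) d)ᶜ := by
    simpa [dist_eq_norm] using hsep x hvx y hy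
  rw [tailKernel, Set.indicator_of_mem hmem, Real.rpow_neg (norm_nonneg _), div_eq_mul_inv,
    ENNReal.ofReal_mul (sq_nonneg _), ← sq_abs, ENNReal.ofReal_pow (abs_nonneg _),
    ← Real.enorm_eq_ofReal_abs, ENNReal.rpow_two]

lemma crossTerm_le_of_dist_le (c : ℝ) {d : ℝ} (hd : 0 < d) (Ωs : Set 𝔼) {Ωr : Set 𝔼} {v : 𝔼 → ℝ}
    (hv : Measurable v) (hsep : ∀ x ∈ Function.support v, ∀ y ∈ Ωr, d ≤ dist x y) :
    crossTerm c Ωs Ωr v ≤ eLpNorm v 2 ^ (2 : ℝ) * ∫⁻ z, tailKernel N c d z := by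
  rw [eLpNorm_two_rpow_eq_lintegral,
    ← lintegral_lintegral_left_mul_sub _ (by fun_prop) (measurable_tailKernel c d), crossTerm]
  calc ∫⁻ x in Ωs, ∫⁻ y in Ωr, ENNReal.ofReal ((v x - v y) ^ 2 / ‖x - y‖ ^ ((N : ℝ) + 2 * c))
      ≤ ∫⁻ x in Ωs, ∫⁻ y in Ωr, ‖v x‖ₑ ^ (2 : ℝ) * tailKernel N c d (x - y) := by
        have := measurable_tailKernel (N := N) c d
        exact lintegral_mono fun x ↦ setLIntegral_mono (by fun_prop) fun y hy ↦
          crossTerm_integrand_le_of_dist_le c hd hsep x hy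
    _ ≤ ∫⁻ x, ∫⁻ y, ‖v x‖ₑ ^ (2 : ℝ) * tailKernel N c d (x - y) :=
        (setLIntegral_le_lintegral _ _).trans
          (lintegral_mono fun x ↦ setLIntegral_le_lintegral _ _)

lemma energyQ_le_of_dist_le (r s c αs αr αc : ℝ) {d : ℝ} (hd : 0 < d)
    (Ωs : Set 𝔼) {Ωr : Set 𝔼} {v : 𝔼 → ℝ} (hv : Measurable v)
    (hsep : ∀ x ∈ Function.support v, ∀ y ∈ Ωr, d ≤ dist x y) :
    energyQ r s c αs αr αc Ωs Ωr v ≤ ENNReal.ofReal (αs / 4) * gagliardoSq s Set.univ v +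
      ENNReal.ofReal (αc / 2) * (eLpNorm v 2 ^ (2 : ℝ) * ∫⁻ z, tailKernel N c d z) := by
  rw [energyQ, gagliardoSq_eq_zero r fun _ ↦ eq_zero_of_dist_support_le hd hsep, mul_zero, add_zero]
  gcongr
  · exact gagliardoSq_mono s (Set.subset_univ Ωs) v
  · exact crossTerm_le_of_dist_le c hd Ωs hv hsep

lemma eLpNorm_two_rescale_rpow (φ : 𝔼 → ℝ) (x₀ : 𝔼) {ε : ℝ} (hε : 0 < ε) :
    eLpNorm (rescale x₀ ε φ) 2 volume ^ (2 : ℝ) =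
      ENNReal.ofReal ε ^ (N : ℝ) * eLpNorm φ 2 volume ^ (2 : ℝ) := by
  simpa using eLpNorm_rescale_rpow volume φ (p := 2) two_ne_zero x₀ hε

lemma eLpNorm_one_rescale (φ : 𝔼 → ℝ) (x₀ : 𝔼) {ε : ℝ} (hε : 0 < ε) :
    eLpNorm (rescale x₀ ε φ) 1 volume = ENNReal.ofReal ε ^ (N : ℝ) * eLpNorm φ 1 volume := by
  simpa using eLpNorm_rescale_rpow volume φ (p := 1) one_ne_zero x₀ hε

lemma energyQ_rescale_le (r s c αs αr αc : ℝ) {φ : 𝔼 → ℝ} (hφm : Measurable φ) {R : ℝ}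
    (hφ : Function.support φ ⊆ Metric.ball 0 R) (x₀ : 𝔼) {ε d : ℝ} (hε : 0 < ε) (hd : 0 < d)
    (Ωs : Set 𝔼) {Ωr : Set 𝔼} (hfar : ∀ y ∈ Ωr, ε * R + d ≤ dist y x₀) :
    energyQ r s c αs αr αc Ωs Ωr (rescale x₀ ε φ) ≤
      ENNReal.ofReal ε ^ ((N : ℝ) - 2 * s) *
          (ENNReal.ofReal (αs / 4) * gagliardoSq s Set.univ φ) +
        ENNReal.ofReal ε ^ (N : ℝ) * (ENNReal.ofReal (αc / 2) *
          (eLpNorm φ 2 volume ^ (2 : ℝ) * ∫⁻ z, tailKernel N c d z)) := by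
  have hvm : Measurable (rescale x₀ ε φ) := hφm.comp (by fun_prop)
  refine (energyQ_le_of_dist_le r s c αs αr αc hd Ωs hvm
    fun _ hx _ ↦ le_dist_of_mem_support_rescale hφ hε hfar hx).trans_eq ?_
  rw [gagliardoSq_univ_rescale s φ x₀ hε, eLpNorm_two_rescale_rpow φ x₀ hε]
  ring

lemma nash_exponent_le_of_not_dense (hN : 1 ≤ N) {r s c : ℝ} (hs : s ∈ Set.Ioo (0 : ℝ) 1)
    (hc : 0 < c) {αs αr αc : ℝ} {Ωs Ωr : Set 𝔼} (hΩr : ¬ Dense Ωr) {α C : ℝ}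
    (hineq : ∀ v : 𝔼 → ℝ, ContDiff ℝ (⊤ : ℕ∞) v → HasCompactSupport v →
      eLpNorm v 2 volume ^ (2 + 4 * α / (N : ℝ)) ≤
        ENNReal.ofReal C * eLpNorm v 1 volume ^ (4 * α / (N : ℝ)) *
          (eLpNorm v 2 volume ^ (2 : ℝ) + energyQ r s c αs αr αc Ωs Ωr v)) :
    α ≤ s := by
  have hN₀ : (0 : ℝ) < N := by exact_mod_cast hN
  obtain ⟨x₀, ρ, hρ, hfar⟩ := exists_forall_dist_le_of_not_dense hΩr
  have hd : 0 < ρ / 2 := half_pos hρ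
  obtain ⟨φ, hφ, hφc, hφsupp, hφne⟩ := exists_contDiff_support_subset_ball (0 : 𝔼) one_pos
  have hfin (p : ℝ≥0∞) : eLpNorm φ p volume ≠ ⊤ :=
    (hφ.continuous.memLp_of_hasCompactSupport hφc).eLpNorm_ne_top
  set A := eLpNorm φ 2 volume ^ (2 : ℝ)
  have hA₀ : A ≠ 0 := by
    simpa [A] using eLpNorm_ne_zero_of_continuous hφ.continuous hφne two_ne_zero
  have hA : A ≠ ⊤ := ENNReal.rpow_ne_top_of_nonneg zero_le_two (hfin 2)
  set J := ENNReal.ofReal (αc / 2) * (A * ∫⁻ z, tailKernel N c (ρ / 2) z)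
  have hJ : J ≠ ⊤ :=
    ENNReal.mul_ne_top ofReal_ne_top (ENNReal.mul_ne_top hA (lintegral_tailKernel_ne_top hc hd))
  set K := ENNReal.ofReal (αs / 4) * gagliardoSq s Set.univ φ
  have hK : K ≠ ⊤ := ENNReal.mul_ne_top ofReal_ne_top
    (gagliardoSq_univ_ne_top hs (hφ.of_le (by simp)) hφc)
  refine le_of_eventually_scaled_inequality hN₀ hs.1.le hA₀ (hfin 1)
    (ofReal_ne_top (r := C)) (ENNReal.add_ne_top.2 ⟨hA, hJ⟩) hK ?_
  filter_upwards [Ioo_mem_nhdsGT hd] with ε ⟨hε, hερ⟩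
  have hv := hineq (rescale x₀ ε φ) (contDiff_rescale hφ x₀ ε)
    (hasCompactSupport_rescale hφc x₀ hε.ne')
  have henergy := energyQ_rescale_le r s c αs αr αc hφ.continuous.measurable hφsupp x₀ hε hd Ωs
    fun y hy ↦ show ε * 1 + ρ / 2 ≤ dist y x₀ by linarith [hfar y hy]
  rw [show 2 + 4 * α / (N : ℝ) = 2 * (1 + 2 * α / N) by ring, ENNReal.rpow_mul,
    eLpNorm_two_rescale_rpow φ x₀ hε, eLpNorm_one_rescale φ x₀ hε] at hv
  refine hv.trans ?_
  rw [mul_add (_ ^ (N : ℝ)), add_assoc, add_comm (_ * J)]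
  gcongr

end Energy

theorem nash_exponent_upper_bound_general (N : ℕ) (hN : 1 ≤ N) (r s c : ℝ)
    (hr : r ∈ Set.Ioo (0 : ℝ) 1) (hs : s ∈ Set.Ioo (0 : ℝ) 1) (hc : 0 < c) (αs αr αc : ℝ)
    (Ωs Ωr : Set (EuclideanSpace ℝ (Fin N))) (hΩs : ¬ Dense Ωs) (hΩr : ¬ Dense Ωr) (α C : ℝ)
    (hineq : ∀ v : EuclideanSpace ℝ (Fin N) → ℝ, ContDiff ℝ (⊤ : ℕ∞) v → HasCompactSupport v →
      eLpNorm v 2 volume ^ (2 + 4 * α / (N : ℝ)) ≤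
        ENNReal.ofReal C * eLpNorm v 1 volume ^ (4 * α / (N : ℝ)) *
          (eLpNorm v 2 volume ^ (2 : ℝ) + energyQ r s c αs αr αc Ωs Ωr v)) :
    α ≤ min r s := by
  refine le_min (nash_exponent_le_of_not_dense hN (r := s) (αs := αr) (αr := αs) (αc := αc)
    (Ωs := Ωr) (C := C) hr hc hΩs fun v hv hvc ↦ ?_)
    (nash_exponent_le_of_not_dense hN hs hc hΩr hineq)
  rw [energyQ_swap r s c αs αr αc Ωs Ωr hv.continuous.measurable]
  exact hineq v hv hvc

/-- Any exponent `α` for which the Nash-type inequality with the coupled energy holds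
must satisfy `α ≤ min{r,s}`. -/
theorem nash_exponent_upper_bound (N : ℕ) (hN : 1 ≤ N) (r s c : ℝ)
    (hr : r ∈ Set.Ioo (0 : ℝ) 1) (hs : s ∈ Set.Ioo (0 : ℝ) 1) (hc : c ∈ Set.Ioo (0 : ℝ) 1)
    (αs αr αc : ℝ) (hαs : 0 < αs) (hαr : 0 < αr) (hαc : 0 < αc)
    (Ωs Ωr : Set (EuclideanSpace ℝ (Fin N))) (hnes : Ωs.Nonempty) (hner : Ωr.Nonempty)
    (hΩs : IsOpen Ωs) (hΩr : IsOpen Ωr) (hdisj : Disjoint Ωs Ωr)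
    (α : ℝ) (hα : 0 < α) (C : ℝ) (hC : 0 < C)
    (hineq : ∀ v : EuclideanSpace ℝ (Fin N) → ℝ, ContDiff ℝ (⊤ : ℕ∞) v → HasCompactSupport v →
      eLpNorm v 2 volume ^ (2 + 4 * α / (N : ℝ)) ≤
        ENNReal.ofReal C * eLpNorm v 1 volume ^ (4 * α / (N : ℝ)) *
          (eLpNorm v 2 volume ^ (2 : ℝ) + energyQ r s c αs αr αc Ωs Ωr v)) :
    α ≤ min r s := by
  exact nash_exponent_upper_bound_general N hN r s c hr hs hc.1 αs αr αc Ωs Ωr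
    (not_dense_of_disjoint_of_isOpen hΩr hner hdisj.symm)
    (not_dense_of_disjoint_of_isOpen hΩs hnes hdisj) α C hineq
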